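/- Existence of m-dissipative extensions (operator-theoretic core of Theorem 'Zorn'(i)): let H be a real Hilbert space and A₀ a linear operator with dense domain D(A₀) ⊆ H such that ⟨A₀ f, f⟩_H ≤ 0 for all f ∈ D(A₀). Then there exists a linear operator A on H extending A₀ (i.e. D(A₀) ⊆ D(A) and A f = A₀ f for f ∈ D(A₀)) such that ⟨A f, f⟩_H ≤ 0 for all f ∈ D(A) and the range {f − A f : f ∈ D(A)} is all of H; that is, A₀ admits an m-dissipative extension. -/

import Mathlib

open RealInnerProductSpace

set_option synthInstance.maxHeartbeats 1000000
set_option maxHeartbeats 1000000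

/-!
The Cayley transform `x - A₀ x ↦ x + A₀ x` of a dissipative operator `A₀` is a contraction, defined
on the range of `1 - A₀`. It extends to a contraction `C` of the whole space: by continuity to the
closure of that range, and through the orthogonal projection beyond it. A vector `g` with
`C g = -g` also satisfies `C† g = -g`, so it is orthogonal to the range of `1 + C`. This range
contains the domain of `A₀`, which is dense; hence `1 + C` is injective, and undoing the Cayley
transform, `A (y + C y) = C y - y`, gives an extension of `A₀`. It is dissipative because `C` is a
contraction, and the range of `1 - A` is the whole space because `(y + C y) - (C y - y) = 2 y`.
-/

open scoped InnerProductSpace InnerProduct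

section Contraction

variable {𝕜 E F : Type*} [RCLike 𝕜]
  [NormedAddCommGroup E] [InnerProductSpace 𝕜 E] [CompleteSpace E]

theorem exists_continuousLinearMap_norm_le_forall_apply_eq
    {V : Type*} [AddCommGroup V] [Module 𝕜 V]
    [NormedAddCommGroup F] [NormedSpace 𝕜 F] [CompleteSpace F]
    (f : V →ₗ[𝕜] F) (e : V →ₗ[𝕜] E) {c : ℝ} (hc : 0 ≤ c) (hfe : ∀ v, ‖f v‖ ≤ c * ‖e v‖) :
    ∃ T : E →L[𝕜] F, ‖T‖ ≤ c ∧ ∀ v, T (e v) = f v := by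
  let K := e.range.topologicalClosure
  let e' : V →ₗ[𝕜] K :=
    e.codRestrict K fun v ↦ e.range.le_topologicalClosure (e.mem_range_self v)
  have he' : DenseRange e' := by
    have himage : ((↑) '' Set.range e' : Set E) = e.range := by
      rw [← Set.range_comp]; rfl
    intro y
    rw [closure_subtype, himage]
    exact y.2
  refine ⟨f.extendOfNorm e' ∘L K.orthogonalProjectionOnto, ?_, fun v ↦ ?_⟩
  · calc ‖f.extendOfNorm e' ∘L K.orthogonalProjectionOnto‖
        ≤ ‖f.extendOfNorm e'‖ * ‖K.orthogonalProjectionOnto‖ :=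
          ContinuousLinearMap.opNorm_comp_le _ _
      _ ≤ c * 1 := by
          gcongr
          · exact LinearMap.opNorm_extendOfNorm_le he' hc hfe
          · exact K.orthogonalProjectionOnto_norm_le
      _ = c := mul_one c
  · have hproj : K.orthogonalProjectionOnto (e v) = e' v :=
      K.orthogonalProjectionOnto_mem_subspace_eq_self (e' v)
    rw [ContinuousLinearMap.comp_apply, hproj]
    exact LinearMap.extendOfNorm_eq he' ⟨c, hfe⟩ v

theorem adjoint_apply_apply_eq_self_of_norm_apply_eq
    [NormedAddCommGroup F] [InnerProductSpace 𝕜 F] [CompleteSpace F]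
    {T : E →L[𝕜] F} (hT : ‖T‖ ≤ 1) {x : E} (hx : ‖T x‖ = ‖x‖) : (T†) (T x) = x := by
  have hT' : ‖T†‖ ≤ 1 := (LinearIsometryEquiv.norm_map _ T).trans_le hT
  refine eq_of_norm_le_re_inner_eq_norm_sq (𝕜 := 𝕜) ?_ ?_
  · simpa only [one_mul, hx] using (T†).le_of_opNorm_le hT' (T x)
  · rw [ContinuousLinearMap.adjoint_inner_left, inner_self_eq_norm_sq, hx]

theorem ker_one_add_le_orthogonal_range {C : E →L[𝕜] E} (hC : ‖C‖ ≤ 1) :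
    (1 + C).ker ≤ (1 + C).rangeᗮ := by
  intro g (hg : g + C g = 0)
  have hCg : C g = -g := eq_neg_of_add_eq_zero_right hg
  have hadj : (C†) (C g) = g :=
    adjoint_apply_apply_eq_self_of_norm_apply_eq hC (by rw [hCg, norm_neg])
  rintro _ ⟨y, rfl⟩
  calc ⟪y + C y, g⟫_𝕜 = ⟪y, g⟫_𝕜 + ⟪C y, -C g⟫_𝕜 := by rw [inner_add_left, hCg, neg_neg]
    _ = ⟪y, g⟫_𝕜 - ⟪y, g⟫_𝕜 := by
      rw [inner_neg_right, ← ContinuousLinearMap.adjoint_inner_right, hadj, sub_eq_add_neg]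
    _ = 0 := sub_self _

theorem ker_one_add_eq_bot_of_dense_range {C : E →L[𝕜] E} (hC : ‖C‖ ≤ 1)
    (hdense : Dense ((1 + C).range : Set E)) : (1 + C).ker = ⊥ := by
  have horth : (1 + C).rangeᗮ = ⊥ := by
    rw [← Submodule.topologicalClosure_eq_top_iff, ← Submodule.dense_iff_topologicalClosure_eq_top]
    exact hdense
  exact le_bot_iff.1 (horth ▸ ker_one_add_le_orthogonal_range hC)

end Contraction

section InverseCayley

variable {R M : Type*} [Ring R] [AddCommGroup M] [Module R M]

/-- The inverse Cayley transform of an everywhere defined operator `C`: the operator `A` whose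
graph consists of the pairs `(a, b)` with `C (a - b) = a + b`, so that `C` is the Cayley transform
`(1 + A) (1 - A)⁻¹` of `A`. These pairs form a graph only if `1 + C` is injective; otherwise
the value is junk. -/
noncomputable def inverseCayley (C : Module.End R M) : M →ₗ.[R] M :=
  (LinearMap.eqLocus (C ∘ₗ (LinearMap.fst R M M - LinearMap.snd R M M))
    (LinearMap.fst R M M + LinearMap.snd R M M)).toLinearPMap

variable {C : Module.End R M}

theorem mem_graph_inverseCayley (hC : (1 + C).ker = ⊥) {a b : M} :
    (a, b) ∈ (inverseCayley C).graph ↔ C (a - b) = a + b := by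
  rw [inverseCayley, Submodule.toLinearPMap_graph_eq]
  · rfl
  · rintro ⟨a, b⟩ (hb : C (a - b) = a + b) (rfl : a = 0)
    have hker : -b + C (-b) = 0 := by rw [← zero_sub, hb, zero_sub, zero_add, neg_add_cancel]
    exact neg_eq_zero.1 (LinearMap.ker_eq_bot'.1 hC (-b) hker)

theorem map_sub_inverseCayley (hC : (1 + C).ker = ⊥) (x : (inverseCayley C).domain) :
    C (x - inverseCayley C x) = x + inverseCayley C x :=
  (mem_graph_inverseCayley hC).1 ((inverseCayley C).mem_graph x)

theorem le_inverseCayley (hC : (1 + C).ker = ⊥) {A : M →ₗ.[R] M}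
    (hCA : ∀ x : A.domain, C (x - A x) = x + A x) : A ≤ inverseCayley C := by
  refine LinearPMap.le_of_le_graph ?_
  rintro ⟨a, b⟩ hab
  obtain ⟨x, rfl, rfl⟩ := A.mem_graph_iff.1 hab
  exact (mem_graph_inverseCayley hC).2 (hCA x)

theorem exists_sub_inverseCayley_eq [Invertible (2 : R)] (hC : (1 + C).ker = ⊥) (y : M) :
    ∃ x : (inverseCayley C).domain, (x : M) - inverseCayley C x = y := by
  have hsub : ⅟(2 : R) • (y + C y) - ⅟(2 : R) • (C y - y) = y := by
    rw [← smul_sub, add_comm, add_sub_sub_cancel, ← two_smul R, invOf_smul_smul]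
  have hadd : ⅟(2 : R) • (y + C y) + ⅟(2 : R) • (C y - y) = C y := by
    rw [← smul_add, add_comm y, add_add_sub_cancel, ← two_smul R, invOf_smul_smul]
  have hgraph : (⅟(2 : R) • (y + C y), ⅟(2 : R) • (C y - y)) ∈ (inverseCayley C).graph :=
    (mem_graph_inverseCayley hC).2 (by rw [hsub, hadd])
  obtain ⟨x, hx, hAx⟩ := (inverseCayley C).mem_graph_iff.1 hgraph
  exact ⟨x, by rw [hx, hAx, hsub]⟩

theorem domain_le_range_one_add [Invertible (2 : R)] {A : M →ₗ.[R] M}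
    (hCA : ∀ x : A.domain, C (x - A x) = x + A x) : A.domain ≤ (1 + C).range := by
  intro x hx
  refine ⟨⅟(2 : R) • (x - A ⟨x, hx⟩), ?_⟩
  rw [map_smul, LinearMap.add_apply, Module.End.one_apply, hCA ⟨x, hx⟩, sub_add_add_cancel,
    ← two_smul R, invOf_smul_smul]

end InverseCayley

section Dissipative

variable {𝕜 H : Type*} [RCLike 𝕜] [SeminormedAddCommGroup H] [InnerProductSpace 𝕜 H]

theorem re_inner_nonpos_iff_norm_add_le_norm_sub {x y : H} :
    RCLike.re ⟪x, y⟫_𝕜 ≤ 0 ↔ ‖x + y‖ ≤ ‖x - y‖ := by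
  rw [← sq_le_sq₀ (norm_nonneg _) (norm_nonneg _), norm_add_sq (𝕜 := 𝕜), norm_sub_sq (𝕜 := 𝕜)]
  constructor <;> intro h <;> linarith

/-- A partially defined operator `A` is dissipative if `Re ⟪A x, x⟫ ≤ 0` on its domain. -/
def IsDissipative (A : H →ₗ.[𝕜] H) : Prop :=
  ∀ x : A.domain, RCLike.re ⟪A x, (x : H)⟫_𝕜 ≤ 0

theorem isDissipative_iff_norm_add_le_norm_sub {A : H →ₗ.[𝕜] H} :
    IsDissipative A ↔ ∀ x : A.domain, ‖(x : H) + A x‖ ≤ ‖(x : H) - A x‖ :=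
  forall_congr' fun x ↦ by
    rw [re_inner_nonpos_iff_norm_add_le_norm_sub, add_comm, norm_sub_rev]

/-- A dissipative operator `A` is m-dissipative if the range of `λ - A` is the whole space for some
`λ > 0`; on a Hilbert space it is equivalent to ask this of `λ = 1`, as is done here. -/
structure IsMDissipative (A : H →ₗ.[𝕜] H) : Prop where
  isDissipative : IsDissipative A
  exists_sub_eq : ∀ h : H, ∃ x : A.domain, (x : H) - A x = h

theorem isMDissipative_inverseCayley {C : H →L[𝕜] H} (hC : ‖C‖ ≤ 1) (hker : (1 + C).ker = ⊥) :
    IsMDissipative (inverseCayley (C : H →ₗ[𝕜] H)) where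
  isDissipative := isDissipative_iff_norm_add_le_norm_sub.2 fun x ↦ by
    rw [← map_sub_inverseCayley hker x]
    exact (C.le_of_opNorm_le_of_le hC le_rfl).trans_eq (one_mul _)
  exists_sub_eq := exists_sub_inverseCayley_eq hker

end Dissipative

theorem IsDissipative.exists_contraction_map_sub_eq_add {𝕜 H : Type*} [RCLike 𝕜]
    [NormedAddCommGroup H] [InnerProductSpace 𝕜 H] [CompleteSpace H] {A : H →ₗ.[𝕜] H}
    (hA : IsDissipative A) :
    ∃ C : H →L[𝕜] H, ‖C‖ ≤ 1 ∧ ∀ x : A.domain, C (x - A x) = x + A x :=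
  exists_continuousLinearMap_norm_le_forall_apply_eq
    (A.domain.subtype + A.toFun) (A.domain.subtype - A.toFun) zero_le_one fun x ↦
      (isDissipative_iff_norm_add_le_norm_sub.1 hA x).trans_eq (one_mul _).symm

theorem stmt_5_general {𝕜 H : Type*} [RCLike 𝕜] [NormedAddCommGroup H] [InnerProductSpace 𝕜 H]
    [CompleteSpace H] (A₀ : H →ₗ.[𝕜] H) (hdense : Dense (A₀.domain : Set H))
    (hdiss : IsDissipative A₀) : ∃ A : H →ₗ.[𝕜] H, A₀ ≤ A ∧ IsMDissipative A := by
  obtain ⟨C, hC, hCA₀⟩ := hdiss.exists_contraction_map_sub_eq_add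
  have hker : (1 + C).ker = ⊥ :=
    ker_one_add_eq_bot_of_dense_range hC (hdense.mono (domain_le_range_one_add hCA₀))
  exact ⟨inverseCayley (C : H →ₗ[𝕜] H), le_inverseCayley hker hCA₀,
    isMDissipative_inverseCayley hC hker⟩

/-- **Existence of m-dissipative extensions**: every densely defined dissipative operator `A₀`
on a real Hilbert space `H` admits an extension `A` that is dissipative and such that the range
of `Id − A` is all of `H`; i.e. `A₀` has an m-dissipative extension. -/
theorem stmt_5
    {H : Type*} [NormedAddCommGroup H] [InnerProductSpace ℝ H] [CompleteSpace H]
    (A₀ : H →ₗ.[ℝ] H) (hdense : Dense (A₀.domain : Set H))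
    (hdiss : ∀ x : A₀.domain, ⟪A₀ x, (x : H)⟫ ≤ 0) :
    ∃ A : H →ₗ.[ℝ] H, A₀ ≤ A ∧ (∀ x : A.domain, ⟪A x, (x : H)⟫ ≤ 0) ∧
      (∀ h : H, ∃ x : A.domain, (x : H) - A x = h) := by
  obtain ⟨A, hA₀A, hA⟩ := stmt_5_general A₀ hdense hdiss
  exact ⟨A, hA₀A, hA.isDissipative, hA.exists_sub_eq⟩
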